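/- (Converse part of Theorem 2, rate bound.) In the MM-SPIR model (with all constraints), for every size-P subset 𝒫 of {1,…,K}: N·P·L ≤ (N−1)·Σ_{n=1}^{N} H(A_n^{[𝒫]}); equivalently, the sum retrieval rate R = P·L / Σ_{n=1}^{N} H(A_n^{[𝒫]}) satisfies R ≤ 1 − 1/N. -/

import Mathlib

open Finset

namespace MMSPIR

variable {Ω : Type} [Fintype Ω]

/-- Probability that the random variable `X` takes the value `v`,
under the weight function `p` on the finite sample space `Ω`. -/
noncomputable def prob (p : Ω → ℝ) {V : Type} [DecidableEq V] (X : Ω → V) (v : V) : ℝ :=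
  ∑ ω ∈ Finset.univ.filter (fun ω => X ω = v), p ω

/-- Shannon entropy of `X`, with logarithm taken to base `q`. -/
noncomputable def ent (q : ℕ) (p : Ω → ℝ) {V : Type} [Fintype V] [DecidableEq V]
    (X : Ω → V) : ℝ :=
  -∑ v : V, prob p X v * Real.logb q (prob p X v)

/-- Conditional entropy `H(X | Y)`, base `q`. -/
noncomputable def cent (q : ℕ) (p : Ω → ℝ) {V W : Type} [Fintype V] [DecidableEq V]
    [Fintype W] [DecidableEq W] (X : Ω → V) (Y : Ω → W) : ℝ :=
  ent q p (fun ω => (X ω, Y ω)) - ent q p Y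

/-- Mutual information `I(X ; Y)`, base `q`. -/
noncomputable def mi (q : ℕ) (p : Ω → ℝ) {V W : Type} [Fintype V] [DecidableEq V]
    [Fintype W] [DecidableEq W] (X : Ω → V) (Y : Ω → W) : ℝ :=
  ent q p X + ent q p Y - ent q p (fun ω => (X ω, Y ω))

/-- Conditional mutual information `I(X ; Y | Z)`, base `q`. -/
noncomputable def cmi (q : ℕ) (p : Ω → ℝ) {U V W : Type} [Fintype U] [DecidableEq U]
    [Fintype V] [DecidableEq V] [Fintype W] [DecidableEq W]
    (X : Ω → U) (Y : Ω → V) (Z : Ω → W) : ℝ :=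
  cent q p X Z + cent q p Y Z - cent q p (fun ω => (X ω, Y ω)) Z

/-- `X` and `Y` have the same distribution. -/
def IdentDist (p : Ω → ℝ) {V : Type} [DecidableEq V] (X Y : Ω → V) : Prop :=
  ∀ v, prob p X v = prob p Y v

section helpers
variable {Ω : Type} [Fintype Ω] {p : Ω → ℝ}

lemma prob_nonneg (hp0 : ∀ ω, 0 ≤ p ω) {V : Type} [DecidableEq V] (X : Ω → V) (v : V) :
    0 ≤ prob p X v := Finset.sum_nonneg fun ω _ => hp0 ω

/-- Change of variables: sums over the values become sums over the sample space. -/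
lemma sum_prob_mul {V : Type} [Fintype V] [DecidableEq V] (X : Ω → V) (g : V → ℝ) :
    ∑ v, prob p X v * g v = ∑ ω, p ω * g (X ω) := by
  rw [← Finset.sum_fiberwise (Finset.univ : Finset Ω) X (fun ω => p ω * g (X ω))]
  refine Finset.sum_congr rfl fun v _ => ?_
  rw [prob, Finset.sum_mul]
  refine Finset.sum_congr rfl fun ω hω => ?_
  rw [(Finset.mem_filter.1 hω).2]

lemma ent_eq (q : ℕ) {V : Type} [Fintype V] [DecidableEq V] (X : Ω → V) :
    ent q p X = -∑ ω, p ω * Real.logb q (prob p X (X ω)) := by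
  rw [ent, sum_prob_mul X (fun v => Real.logb q (prob p X v))]

lemma prob_pos (hp0 : ∀ ω, 0 ≤ p ω) {V : Type} [DecidableEq V] (X : Ω → V) (ω : Ω)
    (h : 0 < p ω) : 0 < prob p X (X ω) :=
  lt_of_lt_of_le h (Finset.single_le_sum (f := p) (fun i _ => hp0 i) (by simp))

lemma ent_congr (q : ℕ) {V V' : Type} [Fintype V] [DecidableEq V] [Fintype V'] [DecidableEq V']
    (X : Ω → V) (Y : Ω → V') (h : ∀ ω ω', Y ω = Y ω' ↔ X ω = X ω') :
    ent q p X = ent q p Y := by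
  rw [ent_eq, ent_eq]
  congr 1
  refine Finset.sum_congr rfl fun ω _ => ?_
  simp only [prob, h]

lemma ent_mono {q : ℕ} (hq : 1 < q) (hp0 : ∀ ω, 0 ≤ p ω)
    {V V' : Type} [Fintype V] [DecidableEq V] [Fintype V'] [DecidableEq V']
    (X : Ω → V) (Y : Ω → V') (h : ∀ ω ω', Y ω = Y ω' → X ω = X ω') :
    ent q p X ≤ ent q p Y := by
  rw [ent_eq, ent_eq, neg_le_neg_iff]
  refine Finset.sum_le_sum fun ω _ => ?_
  rcases (hp0 ω).eq_or_lt with h0 | h0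
  · simp [← h0]
  refine mul_le_mul_of_nonneg_left ?_ h0.le
  refine Real.logb_le_logb_of_le (by exact_mod_cast hq) (prob_pos hp0 Y ω h0) ?_
  refine Finset.sum_le_sum_of_subset_of_nonneg ?_ (fun i _ _ => hp0 i)
  intro ω' h'
  simp only [Finset.mem_filter, Finset.mem_univ, true_and] at h' ⊢
  exact h _ _ h'

lemma sum_prob_pair {V U : Type} [Fintype V] [DecidableEq V] [DecidableEq U]
    (X : Ω → V) (Z : Ω → U) (z : U) :
    ∑ x, prob p (fun ω => (X ω, Z ω)) (x, z) = prob p Z z := by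
  simp only [prob]
  rw [← Finset.sum_fiberwise (Finset.univ.filter fun ω => Z ω = z) X p]
  refine Finset.sum_congr rfl fun x _ => ?_
  rw [Finset.filter_filter]
  refine Finset.sum_congr ?_ fun _ _ => rfl
  ext ω
  simp [and_comm]

lemma sum_prob (hp1 : ∑ ω, p ω = 1) {V : Type} [Fintype V] [DecidableEq V] (X : Ω → V) :
    ∑ v, prob p X v = 1 := by
  have := sum_prob_mul (p := p) X (fun _ => 1)
  simpa [hp1] using this

lemma submod_aux {q : ℕ} (hq : 1 < q) (hp0 : ∀ ω, 0 ≤ p ω) (hp1 : ∑ ω, p ω = 1)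
    {V V' U : Type} [Fintype V] [DecidableEq V] [Fintype V'] [DecidableEq V']
    [Fintype U] [DecidableEq U]
    (X : Ω → V) (Y : Ω → V') (Z : Ω → U) :
    ent q p (fun ω => (X ω, Y ω, Z ω)) + ent q p Z ≤
      ent q p (fun ω => (X ω, Z ω)) + ent q p (fun ω => (Y ω, Z ω)) := by
  set XZ : Ω → V × U := fun ω => (X ω, Z ω) with hXZ
  set YZ : Ω → V' × U := fun ω => (Y ω, Z ω) with hYZ
  set T : Ω → V × V' × U := fun ω => (X ω, Y ω, Z ω) with hT
  have hlq : 0 < Real.log q := Real.log_pos (by exact_mod_cast hq)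
  have hnn : ∀ x y z, 0 ≤ prob p XZ (x, z) * prob p YZ (y, z) / prob p Z z := fun x y z =>
    div_nonneg (mul_nonneg (prob_nonneg hp0 _ _) (prob_nonneg hp0 _ _)) (prob_nonneg hp0 _ _)
  -- the total mass of the comparison measure
  have hR : ∑ ω, p ω * (prob p XZ (XZ ω) * prob p YZ (YZ ω) / prob p Z (Z ω) / prob p T (T ω))
      ≤ 1 := by
    have h1 := sum_prob_mul (p := p) T (fun t =>
      prob p XZ (t.1, t.2.2) * prob p YZ (t.2.1, t.2.2) / prob p Z t.2.2 / prob p T t)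
    refine h1.symm.le.trans ?_
    calc _ ≤ ∑ t : V × V' × U,
          prob p XZ (t.1, t.2.2) * prob p YZ (t.2.1, t.2.2) / prob p Z t.2.2 := by
          refine Finset.sum_le_sum fun t _ => ?_
          rcases eq_or_ne (prob p T t) 0 with h0 | h0
          · simpa [h0] using hnn t.1 t.2.1 t.2.2
          · rw [mul_div_cancel₀ _ h0]
      _ = ∑ z, ∑ x, ∑ y, prob p XZ (x, z) * prob p YZ (y, z) / prob p Z z := by
          simp only [Fintype.sum_prod_type]
          rw [Finset.sum_comm (s := (Finset.univ : Finset U))]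
          exact Finset.sum_congr rfl fun x _ => Finset.sum_comm
      _ = ∑ z, prob p Z z := by
          refine Finset.sum_congr rfl fun z _ => ?_
          simp only [← Finset.sum_div, ← Finset.mul_sum, ← Finset.sum_mul]
          rw [sum_prob_pair X Z z, sum_prob_pair Y Z z, mul_self_div_self]
      _ ≤ 1 := (sum_prob hp1 Z).le
  have key : ∀ ω, p ω * (Real.log (prob p XZ (XZ ω)) + Real.log (prob p YZ (YZ ω))
      - Real.log (prob p Z (Z ω)) - Real.log (prob p T (T ω))) ≤
      p ω * (prob p XZ (XZ ω) * prob p YZ (YZ ω) / prob p Z (Z ω) / prob p T (T ω)) - p ω := by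
    intro ω
    rcases (hp0 ω).eq_or_lt with h0 | h0
    · simp [← h0]
    have a := prob_pos hp0 XZ ω h0
    have b := prob_pos hp0 YZ ω h0
    have c := prob_pos hp0 Z ω h0
    have d := prob_pos hp0 T ω h0
    have := Real.log_le_sub_one_of_pos (div_pos (div_pos (mul_pos a b) c) d)
    rw [Real.log_div (by positivity) (by positivity), Real.log_div (by positivity) (by positivity),
      Real.log_mul (by positivity) (by positivity)] at this
    have := mul_le_mul_of_nonneg_left this h0.le
    linarith
  have hs := Finset.sum_le_sum fun ω (_ : ω ∈ Finset.univ) => key ω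
  simp only [Finset.sum_sub_distrib, mul_sub, mul_add, Finset.sum_add_distrib] at hs
  have he : ∀ {B : Type} [Fintype B] [DecidableEq B] (G : Ω → B),
      ent q p G = (-∑ ω, p ω * Real.log (prob p G (G ω))) / Real.log q := by
    intro B _ _ G
    rw [ent_eq, neg_div, Finset.sum_div]
    simp only [Real.logb, mul_div_assoc]
  rw [he, he, he, he, ← add_div, ← add_div]
  refine div_le_div_of_nonneg_right ?_ hlq.le
  linarith

/-- Submodularity in a flexible form: `U` is determined by `(X, Y)`, and `I` is
determined by `X` and by `Y`. -/
lemma submod {q : ℕ} (hq : 1 < q) (hp0 : ∀ ω, 0 ≤ p ω) (hp1 : ∑ ω, p ω = 1)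
    {V V' V₁ V₂ : Type} [Fintype V] [DecidableEq V] [Fintype V'] [DecidableEq V']
    [Fintype V₁] [DecidableEq V₁] [Fintype V₂] [DecidableEq V₂]
    (U : Ω → V₁) (I : Ω → V₂) (X : Ω → V) (Y : Ω → V')
    (hU : ∀ ω ω', X ω = X ω' → Y ω = Y ω' → U ω = U ω')
    (hX : ∀ ω ω', X ω = X ω' → I ω = I ω')
    (hY : ∀ ω ω', Y ω = Y ω' → I ω = I ω') :
    ent q p U + ent q p I ≤ ent q p X + ent q p Y := by
  have h1 := submod_aux hq hp0 hp1 X Y I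
  have h2 := ent_mono hq hp0 U (fun ω => (X ω, Y ω, I ω)) (by
    intro ω ω' h; simp only [Prod.mk.injEq] at h; exact hU _ _ h.1 h.2.1)
  have h3 := ent_mono hq hp0 (fun ω => (X ω, I ω)) X (by
    intro ω ω' h; simp only [Prod.mk.injEq]; exact ⟨h, hX _ _ h⟩)
  have h4 := ent_mono hq hp0 (fun ω => (Y ω, I ω)) Y (by
    intro ω ω' h; simp only [Prod.mk.injEq]; exact ⟨h, hY _ _ h⟩)
  linarith

lemma ent_unit (q : ℕ) (hp1 : ∑ ω, p ω = 1) : ent q p (fun _ : Ω => ()) = 0 := by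
  rw [ent_eq]
  simp [prob, hp1]

lemma subadd {q : ℕ} (hq : 1 < q) (hp0 : ∀ ω, 0 ≤ p ω) (hp1 : ∑ ω, p ω = 1)
    {V V' V₁ : Type} [Fintype V] [DecidableEq V] [Fintype V'] [DecidableEq V']
    [Fintype V₁] [DecidableEq V₁]
    (U : Ω → V₁) (X : Ω → V) (Y : Ω → V')
    (hU : ∀ ω ω', X ω = X ω' → Y ω = Y ω' → U ω = U ω') :
    ent q p U ≤ ent q p X + ent q p Y := by
  have := submod hq hp0 hp1 U (fun _ => ()) X Y hU (fun _ _ _ => rfl) (fun _ _ _ => rfl)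
  rwa [ent_unit q hp1, add_zero] at this

lemma ent_identDist (q : ℕ) {V V' : Type} [Fintype V] [DecidableEq V]
    [Fintype V'] [DecidableEq V'] (X Y : Ω → V) (h : IdentDist p X Y) (g : V → V') :
    ent q p (fun ω => g (X ω)) = ent q p (fun ω => g (Y ω)) := by
  have : ∀ (Z : Ω → V) v, prob p (fun ω => g (Z ω)) v = ∑ u, prob p Z u * (if g u = v then 1 else 0) := by
    intro Z v
    rw [sum_prob_mul Z (fun u => if g u = v then (1 : ℝ) else 0)]
    simp [prob, Finset.sum_filter]
  simp only [ent, this, h _]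

end helpers

theorem rate_converse
    {Ω MT QT AT FT ST : Type}
    [Fintype Ω] [Fintype MT] [DecidableEq MT] [Fintype QT] [DecidableEq QT]
    [Fintype AT] [DecidableEq AT] [Fintype FT] [DecidableEq FT]
    [Fintype ST] [DecidableEq ST]
    (N K P L q : ℕ) (hN : 2 ≤ N) (hK : 2 ≤ K) (hP1 : 1 ≤ P) (hP2 : P ≤ K - 1)
    (hL : 1 ≤ L) (hq : IsPrimePow q)
    (p : Ω → ℝ) (hp0 : ∀ ω, 0 ≤ p ω) (hp1 : (∑ ω, p ω) = 1)
    (W : Fin K → Ω → MT) (F : Ω → FT) (S : Ω → ST)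
    (Q : Finset (Fin K) → Fin N → Ω → QT)
    (A : Finset (Fin K) → Fin N → Ω → AT)
    (hWk : ∀ k, ent q p (W k) = (L : ℝ))
    (hWall : ent q p (fun ω (k : Fin K) => W k ω) = (K : ℝ) * L)
    (hind : ent q p (fun ω => (F ω, S ω, fun k : Fin K => W k ω)) =
      ent q p F + ent q p S + ent q p (fun ω (k : Fin K) => W k ω))
    (hQdet : ∀ 𝒫₀ : Finset (Fin K), 𝒫₀.card = P →
      cent q p (fun ω (n : Fin N) => Q 𝒫₀ n ω) F = 0)
    (hAdet : ∀ 𝒫₀ : Finset (Fin K), 𝒫₀.card = P → ∀ n : Fin N,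
      cent q p (A 𝒫₀ n) (fun ω => (Q 𝒫₀ n ω, (fun k : Fin K => W k ω), S ω)) = 0)
    (hrel : ∀ 𝒫₀ : Finset (Fin K), 𝒫₀.card = P →
      cent q p (fun ω (k : {x : Fin K // x ∈ 𝒫₀}) => W k.1 ω)
        (fun ω => ((fun n : Fin N => A 𝒫₀ n ω), F ω)) = 0)
    (hupriv : ∀ (n : Fin N) (𝒫₁ 𝒫₂ : Finset (Fin K)), 𝒫₁.card = P → 𝒫₂.card = P →
      IdentDist p
        (fun ω => (Q 𝒫₁ n ω, A 𝒫₁ n ω, (fun k : Fin K => W k ω), S ω))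
        (fun ω => (Q 𝒫₂ n ω, A 𝒫₂ n ω, (fun k : Fin K => W k ω), S ω)))
    (hdpriv : ∀ 𝒫₀ : Finset (Fin K), 𝒫₀.card = P →
      mi q p (fun ω (k : {x : Fin K // x ∈ 𝒫₀ᶜ}) => W k.1 ω)
        (fun ω => ((fun n : Fin N => Q 𝒫₀ n ω), (fun n : Fin N => A 𝒫₀ n ω), F ω)) = 0)
    : ∀ (𝒫₀ : Finset (Fin K)), 𝒫₀.card = P →
      (N : ℝ) * P * L ≤ ((N : ℝ) - 1) * ∑ n : Fin N, ent q p (A 𝒫₀ n) ∧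
      (P : ℝ) * L / (∑ n : Fin N, ent q p (A 𝒫₀ n)) ≤ 1 - 1 / (N : ℝ) := by
  intro P₀ hP₀
  have hq1 : 1 < q := hq.one_lt
  have hPK : P < K := by omega
  have mono := @ent_mono Ω _ p q hq1 hp0
  have sm := @submod Ω _ p q hq1 hp0 hp1
  have sa := @subadd Ω _ p q hq1 hp0 hp1
  let WT : (T : Finset (Fin K)) → Ω → ({x : Fin K // x ∈ T} → MT) := fun T ω k => W k.1 ω
  let Wa : Ω → (Fin K → MT) := fun ω k => W k ω
  let Qs : Finset (Fin K) → Ω → (Fin N → QT) := fun T ω n => Q T n ω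
  let As : Finset (Fin K) → Ω → (Fin N → AT) := fun T ω n => A T n ω
  have hWT : ∀ T ω ω', WT T ω = WT T ω' ↔ ∀ k ∈ T, W k ω = W k ω' := by
    intro T ω ω'; simp [WT, funext_iff]
  have hWa : ∀ ω ω', Wa ω = Wa ω' ↔ ∀ k, W k ω = W k ω' := by
    intro ω ω'; simp [Wa, funext_iff]
  have hQs : ∀ T ω ω', Qs T ω = Qs T ω' ↔ ∀ n, Q T n ω = Q T n ω' := by
    intro T ω ω'; simp [Qs, funext_iff]
  have hAs : ∀ T ω ω', As T ω = As T ω' ↔ ∀ n, A T n ω = A T n ω' := by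
    intro T ω ω'; simp [As, funext_iff]
  -- entropies of message tuples
  have hWle : ∀ T : Finset (Fin K), ent q p (WT T) ≤ (T.card : ℝ) * L := by
    intro T
    induction T using Finset.induction_on with
    | empty =>
      have := mono (WT ∅) (fun _ => ()) (by intro ω ω' _; rw [hWT]; simp)
      rw [ent_unit q hp1] at this
      simpa using this
    | insert a T ha ih =>
      have := sa (WT (insert a T)) (W a) (WT T) (by
        intro ω ω' h1 h2; rw [hWT] at *; simpa using ⟨h1, h2⟩)
      rw [hWk] at this
      rw [Finset.card_insert_of_notMem ha]
      push_cast
      linarith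
  have hWa' : ent q p Wa = (K : ℝ) * L := hWall
  have hcc : ∀ T : Finset (Fin K), (T.card : ℝ) + (Tᶜ.card : ℝ) = K := by
    intro T
    have := Finset.card_add_card_compl T
    rw [Fintype.card_fin] at this
    exact_mod_cast this
  have hWge : ∀ T : Finset (Fin K), (T.card : ℝ) * L ≤ ent q p (WT T) := by
    intro T
    have h1 := sa Wa (WT T) (WT Tᶜ) (by
      intro ω ω' h1 h2
      rw [hWT] at h1 h2
      rw [hWa]
      intro k
      by_cases hk : k ∈ T
      · exact h1 k hk
      · exact h2 k (by simpa using hk))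
    have h2 := hWle Tᶜ
    have h3 := hcc T
    rw [hWa', ← h3] at h1
    linarith
  -- the key inequality
  have key : ∀ n : Fin N, (P : ℝ) * L + ent q p (fun ω => (A P₀ n ω, F ω))
      ≤ ent q p (fun ω => (As P₀ ω, F ω)) := by
    intro n
    let hh : Finset (Fin K) → Finset (Fin K) → ℝ := fun T₀ T =>
      ent q p (fun ω => (A T₀ n ω, Q T₀ n ω, WT T ω))
    let ha : Finset (Fin K) → ℝ := fun T₀ => ent q p (fun ω => (A T₀ n ω, Q T₀ n ω, Wa ω))
    have hhc : ∀ T₀ T, T₀.card = P → hh T₀ T = hh P₀ T := by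
      intro T₀ T h0
      exact ent_identDist q _ _ (hupriv n T₀ P₀ h0 hP₀)
        (fun t => (t.2.1, t.1, fun k : {x : Fin K // x ∈ T} => t.2.2.1 k.1))
    have hac : ∀ T₀, T₀.card = P → ha T₀ = ha P₀ := by
      intro T₀ h0
      exact ent_identDist q _ _ (hupriv n T₀ P₀ h0 hP₀)
        (fun t => (t.2.1, t.1, t.2.2.1))
    -- upper bound by adding the remaining messages
    have hup : ∀ T, ha P₀ - K * L ≤ hh P₀ T - T.card * L := by
      intro T
      have h1 := sa (fun ω => (A P₀ n ω, Q P₀ n ω, Wa ω))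
        (fun ω => (A P₀ n ω, Q P₀ n ω, WT T ω)) (WT Tᶜ) (by
          intro ω ω' h1 h2
          simp only [Prod.mk.injEq] at h1 ⊢
          obtain ⟨h3, h4, h5⟩ := h1
          rw [hWT] at h5 h2
          refine ⟨h3, h4, (hWa _ _).2 fun k => ?_⟩
          by_cases hk : k ∈ T
          · exact h5 k hk
          · exact h2 k (by simpa using hk))
      have h2 := hWle Tᶜ
      have h3 := hcc T
      have h4 : (K : ℝ) * L = T.card * L + Tᶜ.card * L := by rw [← h3]; ring
      change ha P₀ ≤ hh P₀ T + _ at h1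
      linarith
    -- database privacy
    have hbase : ∀ T, T.card = P → hh P₀ T - T.card * L ≤ ha P₀ - K * L := by
      intro T hT
      have hd := hdpriv T hT
      have hr := hrel T hT
      rw [mi] at hd
      rw [cent] at hr
      change ent q p (WT Tᶜ) + ent q p (fun ω => (Qs T ω, As T ω, F ω)) -
        ent q p (fun ω => (WT Tᶜ ω, (Qs T ω, As T ω, F ω))) = 0 at hd
      change ent q p (fun ω => (WT T ω, (As T ω, F ω))) - ent q p (fun ω => (As T ω, F ω)) = 0 at hr
      have h1 := sm (fun ω => (WT Tᶜ ω, (Qs T ω, As T ω, F ω)))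
        (fun ω => (A T n ω, Q T n ω, WT T ω))
        (fun ω => (Qs T ω, As T ω, F ω, WT T ω))
        (fun ω => (A T n ω, Q T n ω, Wa ω))
        (by intro ω ω'; simp only [Prod.mk.injEq, hWT, hWa, hQs, hAs]; tauto)
        (by intro ω ω'; simp only [Prod.mk.injEq, hWT, hWa, hQs, hAs]; tauto)
        (by intro ω ω'; simp only [Prod.mk.injEq, hWT, hWa, hQs, hAs]; tauto)
      have h2 := sm (fun ω => (Qs T ω, As T ω, F ω, WT T ω)) (fun ω => (As T ω, F ω))
        (fun ω => (WT T ω, (As T ω, F ω))) (fun ω => (Qs T ω, As T ω, F ω))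
        (by intro ω ω'; simp only [Prod.mk.injEq, hWT, hWa, hQs, hAs]; tauto)
        (by intro ω ω'; simp only [Prod.mk.injEq, hWT, hWa, hQs, hAs]; tauto)
        (by intro ω ω'; simp only [Prod.mk.injEq, hWT, hWa, hQs, hAs]; tauto)
      have h3 := hWge Tᶜ
      have h4 : (K : ℝ) * L = T.card * L + Tᶜ.card * L := by rw [← hcc T]; ring
      have h5 := hhc T T hT
      have h6 := hac T hT
      change _ + hh T T ≤ _ + ha T at h1
      linarith
    -- downward induction on the size of the set
    have hind' : ∀ d : ℕ, ∀ T : Finset (Fin K), T.card + d = P →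
        hh P₀ T - T.card * L ≤ ha P₀ - K * L := by
      intro d
      induction d with
      | zero => intro T hT; exact hbase T (by simpa using hT)
      | succ d ih =>
        intro T hT
        have hc : 1 < Tᶜ.card := by
          have := Finset.card_add_card_compl T
          rw [Fintype.card_fin] at this
          omega
        obtain ⟨a, haT, b, hbT, hab⟩ := Finset.one_lt_card.1 hc
        rw [Finset.mem_compl] at haT hbT
        have ca := Finset.card_insert_of_notMem haT
        have cb := Finset.card_insert_of_notMem hbT
        have hab' : a ∉ insert b T := by simp [hab, haT]
        have cab := Finset.card_insert_of_notMem hab'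
        have ia := ih (insert a T) (by omega)
        have ib := ih (insert b T) (by omega)
        have iu := hup (insert a (insert b T))
        rw [cab, cb] at iu
        rw [ca] at ia
        rw [cb] at ib
        push_cast at ia ib iu
        have h1 := sm (fun ω => (A P₀ n ω, Q P₀ n ω, WT (insert a (insert b T)) ω))
          (fun ω => (A P₀ n ω, Q P₀ n ω, WT T ω))
          (fun ω => (A P₀ n ω, Q P₀ n ω, WT (insert a T) ω))
          (fun ω => (A P₀ n ω, Q P₀ n ω, WT (insert b T) ω))
          (by intro ω ω'; simp only [Prod.mk.injEq, hWT, Finset.forall_mem_insert]; tauto)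
          (by intro ω ω'; simp only [Prod.mk.injEq, hWT, Finset.forall_mem_insert]; tauto)
          (by intro ω ω'; simp only [Prod.mk.injEq, hWT, Finset.forall_mem_insert]; tauto)
        change hh P₀ _ + hh P₀ _ ≤ hh P₀ _ + hh P₀ _ at h1
        linarith
    have e1 := hind' P ∅ (by simp)
    have e2 := hup P₀
    rw [hP₀] at e2
    simp only [Finset.card_empty, Nat.cast_zero, zero_mul, sub_zero] at e1
    have e3 : ent q p (fun ω => (A P₀ n ω, Q P₀ n ω)) ≤ hh P₀ ∅ :=
      mono _ _ (by intro ω ω'; simp only [Prod.mk.injEq]; tauto)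
    have hQ := hQdet P₀ hP₀
    rw [cent] at hQ
    change ent q p (fun ω => (Qs P₀ ω, F ω)) - ent q p F = 0 at hQ
    have hA := hAdet P₀ hP₀ n
    rw [cent] at hA
    change ent q p (fun ω => (A P₀ n ω, (Q P₀ n ω, Wa ω, S ω))) -
      ent q p (fun ω => (Q P₀ n ω, Wa ω, S ω)) = 0 at hA
    have hr := hrel P₀ hP₀
    rw [cent] at hr
    change ent q p (fun ω => (WT P₀ ω, (As P₀ ω, F ω))) -
      ent q p (fun ω => (As P₀ ω, F ω)) = 0 at hr
    change ent q p (fun ω => (F ω, S ω, Wa ω)) = ent q p F + ent q p S + ent q p Wa at hind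
    -- Markov chain
    have s1 := sm (fun ω => (F ω, S ω, Wa ω)) (fun ω => (A P₀ n ω, Q P₀ n ω, WT P₀ ω))
      (fun ω => (A P₀ n ω, WT P₀ ω, F ω, Q P₀ n ω))
      (fun ω => (A P₀ n ω, (Q P₀ n ω, Wa ω, S ω)))
      (by intro ω ω'; simp only [Prod.mk.injEq, hWT, hWa]; tauto)
      (by intro ω ω'; simp only [Prod.mk.injEq, hWT, hWa]; tauto)
      (by intro ω ω'; simp only [Prod.mk.injEq, hWT, hWa]; tauto)
    have s2 := sa (fun ω => (Q P₀ n ω, Wa ω, S ω)) (Q P₀ n) (fun ω => (Wa ω, S ω))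
      (by intro ω ω'; simp only [Prod.mk.injEq]; tauto)
    have s3 := sa (fun ω => (Wa ω, S ω)) Wa S
      (by intro ω ω'; simp only [Prod.mk.injEq]; tauto)
    have s4 := sm (fun ω => (A P₀ n ω, F ω)) (Q P₀ n) (fun ω => (A P₀ n ω, Q P₀ n ω))
      (fun ω => (Qs P₀ ω, F ω))
      (by intro ω ω'; simp only [Prod.mk.injEq]; tauto)
      (by intro ω ω'; simp only [Prod.mk.injEq]; tauto)
      (by intro ω ω'; simp only [Prod.mk.injEq, hQs]; tauto)
    have s5 := sm (fun ω => (A P₀ n ω, WT P₀ ω, F ω, Q P₀ n ω)) F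
      (fun ω => (WT P₀ ω, (As P₀ ω, F ω))) (fun ω => (Qs P₀ ω, F ω))
      (by intro ω ω'; simp only [Prod.mk.injEq, hQs, hAs]; tauto)
      (by intro ω ω'; simp only [Prod.mk.injEq]; tauto)
      (by intro ω ω'; simp only [Prod.mk.injEq]; tauto)
    change _ + hh P₀ P₀ ≤ _ at s1
    linarith
  -- conditional subadditivity of the answers
  have hsub : ∀ s : Finset (Fin N),
      ent q p (fun ω => ((fun n : {x : Fin N // x ∈ s} => A P₀ n.1 ω), F ω)) ≤
        ent q p F + ∑ n ∈ s, (ent q p (fun ω => (A P₀ n ω, F ω)) - ent q p F) := by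
    intro s
    induction s using Finset.induction_on with
    | empty =>
      simp only [Finset.sum_empty, add_zero]
      refine mono _ _ ?_
      intro ω ω' h
      simp [h, funext_iff]
    | insert a s has ih =>
      rw [Finset.sum_insert has]
      have := sm (fun ω => ((fun n : {x : Fin N // x ∈ insert a s} => A P₀ n.1 ω), F ω)) F
        (fun ω => (A P₀ a ω, F ω)) (fun ω => ((fun n : {x : Fin N // x ∈ s} => A P₀ n.1 ω), F ω))
        (by
          intro ω ω'
          simp only [Prod.mk.injEq, funext_iff, Subtype.forall, Finset.forall_mem_insert]
          tauto)
        (by intro ω ω'; simp only [Prod.mk.injEq]; tauto)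
        (by intro ω ω'; simp only [Prod.mk.injEq]; tauto)
      linarith
  have hall : ent q p (fun ω => (As P₀ ω, F ω)) ≤
      ent q p F + ∑ n : Fin N, (ent q p (fun ω => (A P₀ n ω, F ω)) - ent q p F) := by
    refine le_trans (mono _ _ ?_) (hsub Finset.univ)
    intro ω ω'
    simp only [Prod.mk.injEq, funext_iff, Subtype.forall, hAs, Finset.mem_univ, forall_true_left]
    tauto
  have hone : ∑ n : Fin N, (ent q p (fun ω => (A P₀ n ω, F ω)) - ent q p F) ≤
      ∑ n : Fin N, ent q p (A P₀ n) := by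
    refine Finset.sum_le_sum fun n _ => ?_
    have := sa (fun ω => (A P₀ n ω, F ω)) (A P₀ n) F
      (by intro ω ω'; simp only [Prod.mk.injEq]; tauto)
    linarith
  have hsum := Finset.sum_le_sum fun n (_ : n ∈ (Finset.univ : Finset (Fin N))) => key n
  have hN' : (2 : ℝ) ≤ N := by exact_mod_cast hN
  have hmain : (N : ℝ) * P * L ≤ ((N : ℝ) - 1) * ∑ n : Fin N, ent q p (A P₀ n) := by
    simp only [Finset.sum_add_distrib, Finset.sum_sub_distrib, Finset.sum_const, Finset.card_univ,
      Fintype.card_fin, nsmul_eq_mul] at hsum hall hone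
    nlinarith
  refine ⟨hmain, ?_⟩
  have hP' : (1 : ℝ) ≤ P := by exact_mod_cast hP1
  have hL' : (1 : ℝ) ≤ L := by exact_mod_cast hL
  have hpos : 0 < ∑ n : Fin N, ent q p (A P₀ n) := by
    have h1 : (0 : ℝ) < (N : ℝ) * P * L := by positivity
    exact pos_of_mul_pos_right (h1.trans_le hmain) (by linarith)
  rw [div_le_iff₀ hpos]
  have hN0 : (0 : ℝ) < N := by linarith
  have : (1 - 1 / (N : ℝ)) * ∑ n : Fin N, ent q p (A P₀ n) =
      (((N : ℝ) - 1) * ∑ n : Fin N, ent q p (A P₀ n)) / N := by field_simp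
  rw [this, le_div_iff₀ hN0]
  linarith


end MMSPIR
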